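/- Let X be a complete separable metric space, let k, ℓ > 0 be real numbers, δ₀ > 0, and C₁, C₂ ≥ 0. For each δ ∈ (0, δ₀] let μ₁^δ and μ₂^δ be probability measures on X such that: the support of μ₂^δ is nonempty with diameter at most C₁·δ^ℓ; μ₁^δ is absolutely continuous with respect to μ₂^δ; and the Radon–Nikodym derivative satisfies |(dμ₁^δ/dμ₂^δ)(x) − 1| ≤ C₂·δ^k for μ₂^δ-almost every x. Then there exists a constant C > 0 (one may take C = C₁·C₂) such that for every δ ∈ (0, δ₀] and every probability measure μ on X with finite first moment, |W₁(μ, μ₁^δ) − W₁(μ, μ₂^δ)| ≤ C·δ^{k+ℓ}. -/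

import Mathlib

open MeasureTheory Set

/-- The 1-Wasserstein distance: infimum over couplings of the integral of the distance. -/
noncomputable def W1 {X : Type*} [MeasurableSpace X] [PseudoMetricSpace X]
    (μ ν : Measure X) : ℝ :=
  sInf { c : ℝ | ∃ π : Measure (X × X), IsProbabilityMeasure π ∧
      π.map Prod.fst = μ ∧ π.map Prod.snd = ν ∧ c = ∫ p, dist p.1 p.2 ∂π }

/-- The topological support of a measure: points all of whose neighbourhoods have positive
measure. -/
def msupport {X : Type*} [TopologicalSpace X] [MeasurableSpace X] (μ : Measure X) : Set X :=
  {x | ∀ U ∈ nhds x, 0 < μ U}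

open scoped ENNReal

lemma aux_map_snd {X : Type*} [MeasurableSpace X] (π : Measure (X × X)) (h : X → ℝ≥0∞)
    (hh : Measurable h) :
    (π.withDensity (fun p => h p.2)).map Prod.snd = (π.map Prod.snd).withDensity h := by
  ext s hs
  rw [Measure.map_apply measurable_snd hs, withDensity_apply _ (measurable_snd hs),
    withDensity_apply _ hs, setLIntegral_map hs hh measurable_snd]

lemma aux_coupling {X : Type*} [MetricSpace X] [TopologicalSpace.SeparableSpace X]
    [MeasurableSpace X] [BorelSpace X] (μ ν ν' ρ : Measure X) [IsProbabilityMeasure ν]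
    [IsProbabilityMeasure ν'] (S : Set X) (D : ℝ≥0∞) (hD : EMetric.diam S ≤ D)
    (h : X → ℝ≥0∞) (hh : Measurable h) (h1 : ∀ x, h x ≤ 1)
    (hν : ∀ᵐ x ∂ν, x ∈ S) (hρ : ∀ᵐ x ∂ρ, x ∈ S)
    (hν' : ν' = ν.withDensity h + ρ)
    (π : Measure (X × X)) (hπ : IsProbabilityMeasure π) (hfst : π.map Prod.fst = μ)
    (hsnd : π.map Prod.snd = ν) :
    ∃ π' : Measure (X × X), IsProbabilityMeasure π' ∧ π'.map Prod.fst = μ ∧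
      π'.map Prod.snd = ν' ∧
      ∫⁻ p, edist p.1 p.2 ∂π' ≤ ∫⁻ p, edist p.1 p.2 ∂π + D * ρ univ := by
  have : SecondCountableTopology X := UniformSpace.secondCountable_of_separable X
  have hh2 : Measurable (fun p : X × X => h p.2) := hh.comp measurable_snd
  have hh3 : Measurable (fun p : X × X => 1 - h p.2) := measurable_const.sub hh2
  have hed : Measurable (fun p : X × X => edist p.1 p.2) := measurable_edist
  set m := ρ univ with hm
  have hI : ∫⁻ p, h p.2 ∂π = ∫⁻ x, h x ∂ν := by
    rw [← hsnd, lintegral_map hh measurable_snd]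
  have hI1 : ∫⁻ x, h x ∂ν + m = 1 := by
    have := congrArg (fun q : Measure X => q univ) hν'
    simp only [measure_univ, Measure.add_apply, withDensity_apply _ MeasurableSet.univ,
      Measure.restrict_univ] at this
    exact this.symm
  have hI2 : ∫⁻ x, h x ∂ν + ∫⁻ p, (1 - h p.2) ∂π = 1 := by
    rw [← hI, ← lintegral_add_left hh2]
    simp [add_tsub_cancel_of_le (h1 _)]
  have hfin : ∫⁻ x, h x ∂ν ≠ ⊤ := by
    intro hc; rw [hc] at hI1; simp at hI1
  have hm' : ∫⁻ p, (1 - h p.2) ∂π = m :=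
    (ENNReal.add_right_inj hfin).1 (hI2.trans hI1.symm)
  have hmt : m ≠ ⊤ := by
    intro hc; rw [hc] at hI1; simp at hI1
  have : IsFiniteMeasure ρ := ⟨lt_top_iff_ne_top.2 hmt⟩
  have hsum : π.withDensity (fun p => h p.2) + π.withDensity (fun p => 1 - h p.2) = π := by
    rw [← withDensity_add_left hh2]
    have : ((fun p : X × X => h p.2) + fun p => 1 - h p.2) = 1 := by
      ext p; simp [add_tsub_cancel_of_le (h1 _)]
    rw [this, withDensity_one]
  by_cases hm0 : m = 0
  · have hρ0 : ρ = 0 := Measure.measure_univ_eq_zero.1 hm0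
    have hz : π.withDensity (fun p => 1 - h p.2) = 0 := by
      apply Measure.measure_univ_eq_zero.1
      rw [withDensity_apply _ MeasurableSet.univ, Measure.restrict_univ, hm', hm0]
    rw [hz, add_zero] at hsum
    refine ⟨π, hπ, hfst, ?_, le_self_add⟩
    rw [hν', hρ0, add_zero, ← hsnd, ← aux_map_snd _ _ hh, hsum]
  set A := (π.withDensity (fun p => 1 - h p.2)).map Prod.fst with hA
  have hAu : A univ = m := by
    rw [hA, Measure.map_apply measurable_fst MeasurableSet.univ, preimage_univ,
      withDensity_apply _ MeasurableSet.univ, Measure.restrict_univ, hm']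
  have : IsFiniteMeasure A := ⟨by rw [hAu]; exact lt_top_iff_ne_top.2 hmt⟩
  have hmm : m⁻¹ * m = 1 := ENNReal.inv_mul_cancel hm0 hmt
  set π' := π.withDensity (fun p => h p.2) + m⁻¹ • A.prod ρ with hπ'
  have hs' : π'.map Prod.snd = ν' := by
    rw [hπ', Measure.map_add _ _ measurable_snd, Measure.map_smul, aux_map_snd _ _ hh, hsnd,
      Measure.map_snd_prod, hAu, smul_smul, hmm, one_smul, hν']
  have hf' : π'.map Prod.fst = μ := by
    rw [hπ', Measure.map_add _ _ measurable_fst, Measure.map_smul,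
      Measure.map_fst_prod, ← hm, smul_smul, hmm, one_smul, hA,
      ← Measure.map_add _ _ measurable_fst, hsum, hfst]
  refine ⟨π', ⟨?_⟩, hf', hs', ?_⟩
  · have := congrArg (fun q : Measure X => q univ) hs'
    simpa [Measure.map_apply measurable_snd MeasurableSet.univ] using this
  have hπS : ∀ᵐ p ∂π, p.2 ∈ S := by
    rw [← hsnd] at hν
    exact ae_of_ae_map measurable_snd.aemeasurable hν
  have hF : Measurable (fun x : X => ∫⁻ z, edist x z ∂ρ) := hed.lintegral_prod_right'
  have hF1 : Measurable (fun p : X × X => ∫⁻ z, edist p.1 z ∂ρ) := hF.comp measurable_fst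
  have hhd : Measurable (fun p : X × X => (1 - h p.2) * edist p.1 p.2) := hh3.mul hed
  have key : ∫⁻ p, edist p.1 p.2 ∂(A.prod ρ) ≤
      ∫⁻ p, ((1 - h p.2) * edist p.1 p.2 + D * (1 - h p.2)) * m ∂π := by
    rw [lintegral_prod _ hed.aemeasurable, hA, lintegral_map hF measurable_fst,
      lintegral_withDensity_eq_lintegral_mul _ hh3 hF1]
    apply lintegral_mono_ae
    filter_upwards [hπS] with p hp
    have : ∫⁻ z, edist p.1 z ∂ρ ≤ (edist p.1 p.2 + D) * m := by
      rw [hm, ← lintegral_const]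
      apply lintegral_mono_ae
      filter_upwards [hρ] with z hz
      refine (edist_triangle _ p.2 _).trans ?_
      gcongr
      exact (EMetric.edist_le_diam_of_mem hp hz).trans hD
    simp only [Pi.mul_apply, Function.comp]
    calc _ ≤ (1 - h p.2) * ((edist p.1 p.2 + D) * m) := by gcongr
      _ = _ := by ring
  have key2 : m⁻¹ * ∫⁻ p, edist p.1 p.2 ∂(A.prod ρ) ≤
      ∫⁻ p, (1 - h p.2) * edist p.1 p.2 ∂π + D * m := by
    rw [lintegral_mul_const' _ _ hmt, lintegral_add_left hhd,
      lintegral_const_mul _ hh3, hm'] at key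
    calc _ ≤ m⁻¹ * ((∫⁻ p, (1 - h p.2) * edist p.1 p.2 ∂π + D * m) * m) := by gcongr
      _ = (m⁻¹ * m) * (∫⁻ p, (1 - h p.2) * edist p.1 p.2 ∂π + D * m) := by ring
      _ = _ := by rw [hmm, one_mul]
  rw [hπ', lintegral_add_measure, lintegral_smul_measure, smul_eq_mul,
    lintegral_withDensity_eq_lintegral_mul _ hh2 hed]
  refine (add_le_add_right key2 _).trans ?_
  rw [← add_assoc, ← lintegral_add_left (hh2.mul hed)]
  refine le_of_eq ?_
  congr 1
  apply lintegral_congr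
  intro p
  simp only [Pi.mul_apply]
  rw [← add_mul, add_tsub_cancel_of_le (h1 _), one_mul]

lemma aux_W1 {X : Type*} [MetricSpace X] [TopologicalSpace.SeparableSpace X]
    [MeasurableSpace X] [BorelSpace X] (μ ν ν' ρ : Measure X) [IsProbabilityMeasure μ]
    [IsProbabilityMeasure ν]
    [IsProbabilityMeasure ν'] (S : Set X) (hS : S.Nonempty)
    (D : ℝ) (hD0 : 0 ≤ D) (hD : EMetric.diam S ≤ ENNReal.ofReal D)
    (h : X → ℝ≥0∞) (hh : Measurable h) (h1 : ∀ x, h x ≤ 1)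
    (hν : ∀ᵐ x ∂ν, x ∈ S) (hρ : ∀ᵐ x ∂ρ, x ∈ S)
    (hν' : ν' = ν.withDensity h + ρ) (ε : ℝ) (hε0 : 0 ≤ ε) (hε : ρ univ ≤ ENNReal.ofReal ε)
    (x₀ : X) (hμ : Integrable (fun x => dist x₀ x) μ) :
    W1 μ ν' ≤ W1 μ ν + D * ε := by
  have : SecondCountableTopology X := UniformSpace.secondCountable_of_separable X
  have hI : ∀ π : Measure (X × X), ∫ p, dist p.1 p.2 ∂π = (∫⁻ p, edist p.1 p.2 ∂π).toReal := by
    intro π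
    rw [integral_eq_lintegral_of_nonneg_ae (Filter.Eventually.of_forall fun _ => dist_nonneg)
      (measurable_dist.aestronglyMeasurable)]
    simp [edist_dist]
  rw [← sub_le_iff_le_add]
  refine le_csInf ⟨_, μ.prod ν, inferInstance, by simp, by simp, rfl⟩ ?_
  rintro c ⟨π, hπ, hf, hs, rfl⟩
  obtain ⟨π', hπ', hf', hs', hle⟩ := aux_coupling μ ν ν' ρ S _ hD h hh h1 hν hρ hν' π hπ hf hs
  rw [sub_le_iff_le_add]
  have hW : W1 μ ν' ≤ ∫ p, dist p.1 p.2 ∂π' := by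
    refine csInf_le ⟨0, ?_⟩ ⟨π', hπ', hf', hs', rfl⟩
    rintro c ⟨π, -, -, -, rfl⟩
    exact integral_nonneg fun _ => dist_nonneg
  refine hW.trans ?_
  obtain ⟨s, hsS⟩ := hS
  have hfin : ∫⁻ p, edist p.1 p.2 ∂π ≠ ⊤ := by
    have hμf : ∫⁻ x, edist x₀ x ∂μ ≠ ⊤ := by
      have := hμ.lintegral_lt_top
      simpa [edist_dist] using this.ne
    have hb : ∫⁻ p, edist p.1 p.2 ∂π ≤
        ∫⁻ p, (edist x₀ p.1 + (edist x₀ s + ENNReal.ofReal D)) ∂π := by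
      apply lintegral_mono_ae
      have hπS : ∀ᵐ p ∂π, p.2 ∈ S := by
        rw [← hs] at hν
        exact ae_of_ae_map measurable_snd.aemeasurable hν
      filter_upwards [hπS] with p hp
      refine (edist_triangle_left p.1 p.2 x₀).trans ?_
      gcongr
      refine (edist_triangle _ s _).trans ?_
      gcongr
      exact (EMetric.edist_le_diam_of_mem hsS hp).trans hD
    have hme : Measurable (fun x => edist x₀ x) := measurable_edist_right
    rw [lintegral_add_right _ measurable_const, ← lintegral_map (f := fun x => edist x₀ x) hme
      measurable_fst, hf] at hb
    refine ne_top_of_le_ne_top ?_ hb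
    simp [hμf, edist_ne_top]
  rw [hI, hI]
  have h2 : ∫⁻ p, edist p.1 p.2 ∂π' ≤ ∫⁻ p, edist p.1 p.2 ∂π + ENNReal.ofReal (D * ε) := by
    refine hle.trans ?_
    rw [ENNReal.ofReal_mul hD0]
    gcongr
  have h3 := ENNReal.toReal_mono (by simp [hfin]) h2
  rwa [ENNReal.toReal_add hfin ENNReal.ofReal_ne_top, ENNReal.toReal_ofReal (by positivity)] at h3

lemma aux_supp {X : Type*} [MetricSpace X] [TopologicalSpace.SeparableSpace X]
    [MeasurableSpace X] (μ : Measure X) : ∀ᵐ x ∂μ, x ∈ msupport μ := by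
  have : SecondCountableTopology X := UniformSpace.secondCountable_of_separable X
  change μ (msupport μ)ᶜ = 0
  apply measure_null_of_locally_null
  intro x hx
  simp only [msupport, mem_compl_iff, mem_setOf_eq, not_forall, not_lt, nonpos_iff_eq_zero] at hx
  obtain ⟨U, hU, h0⟩ := hx
  exact ⟨U, mem_nhdsWithin_of_mem_nhds hU, h0⟩

/-- `W₁` distance approximation: if `μ₁^δ ≪ μ₂^δ` with density `1 + O(δ^k)` and the support
of `μ₂^δ` has diameter `O(δ^ℓ)`, then `|W₁(μ, μ₁^δ) − W₁(μ, μ₂^δ)| = O(δ^{k+ℓ})`, uniformly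
over probability measures `μ` with finite first moment. -/
theorem w1_distance_approximation
    {X : Type*} [MetricSpace X] [CompleteSpace X] [TopologicalSpace.SeparableSpace X]
    [MeasurableSpace X] [BorelSpace X]
    (k l δ₀ : ℝ) (hk : 0 < k) (hl : 0 < l) (hδ₀ : 0 < δ₀)
    (C₁ C₂ : ℝ) (hC₁ : 0 ≤ C₁) (hC₂ : 0 ≤ C₂)
    (μ₁ μ₂ : ℝ → Measure X)
    (hprob₁ : ∀ δ ∈ Ioc (0:ℝ) δ₀, IsProbabilityMeasure (μ₁ δ))
    (hprob₂ : ∀ δ ∈ Ioc (0:ℝ) δ₀, IsProbabilityMeasure (μ₂ δ))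
    (hsupp : ∀ δ ∈ Ioc (0:ℝ) δ₀, (msupport (μ₂ δ)).Nonempty ∧
      EMetric.diam (msupport (μ₂ δ)) ≤ ENNReal.ofReal (C₁ * δ ^ l))
    (hac : ∀ δ ∈ Ioc (0:ℝ) δ₀, μ₁ δ ≪ μ₂ δ)
    (hrn : ∀ δ ∈ Ioc (0:ℝ) δ₀,
      ∀ᵐ x ∂(μ₂ δ), |((μ₁ δ).rnDeriv (μ₂ δ) x).toReal - 1| ≤ C₂ * δ ^ k) :
    ∃ C > (0:ℝ), ∀ δ ∈ Ioc (0:ℝ) δ₀, ∀ μ : Measure X, IsProbabilityMeasure μ →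
      (∃ x₀ : X, Integrable (fun x => dist x₀ x) μ) →
      |W1 μ (μ₁ δ) - W1 μ (μ₂ δ)| ≤ C * δ ^ (k + l) := by
  refine ⟨C₁ * C₂ + 1, by positivity, ?_⟩
  rintro δ hδ μ hμ ⟨x₀, hx₀⟩
  have := hprob₁ δ hδ
  have := hprob₂ δ hδ
  obtain ⟨hS, hdiam⟩ := hsupp δ hδ
  have hδ0 : 0 < δ := hδ.1
  have hδk : 0 ≤ C₂ * δ ^ k := by positivity
  have hδl : 0 ≤ C₁ * δ ^ l := by positivity
  set f := (μ₁ δ).rnDeriv (μ₂ δ) with hf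
  have hfm : Measurable f := Measure.measurable_rnDeriv _ _
  have hft : ∀ᵐ x ∂(μ₂ δ), f x ≠ ⊤ := Measure.rnDeriv_ne_top _ _
  have hwd : (μ₂ δ).withDensity f = μ₁ δ := Measure.withDensity_rnDeriv_eq _ _ (hac δ hδ)
  have hS2 := aux_supp (μ₂ δ)
  have hS1 : ∀ᵐ x ∂(μ₁ δ), x ∈ msupport (μ₂ δ) := (hac δ hδ).ae_le hS2
  have hb : ∀ᵐ x ∂(μ₂ δ), f x - 1 ≤ ENNReal.ofReal (C₂ * δ ^ k) ∧
      1 - f x ≤ ENNReal.ofReal (C₂ * δ ^ k) := by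
    filter_upwards [hft, hrn δ hδ] with x hx hx2
    have he := ENNReal.ofReal_toReal hx
    have hn : 0 ≤ (f x).toReal := ENNReal.toReal_nonneg
    rw [abs_le] at hx2
    rw [← he, ← ENNReal.ofReal_one, ← ENNReal.ofReal_sub _ zero_le_one,
      ← ENNReal.ofReal_sub _ hn]
    exact ⟨ENNReal.ofReal_le_ofReal (by linarith), ENNReal.ofReal_le_ofReal (by linarith)⟩
  have hr : ∀ g : X → ℝ≥0∞, (∀ᵐ x ∂(μ₂ δ), g x ≤ ENNReal.ofReal (C₂ * δ ^ k)) →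
      (μ₂ δ).withDensity g univ ≤ ENNReal.ofReal (C₂ * δ ^ k) := by
    intro g hg
    rw [withDensity_apply _ MeasurableSet.univ, Measure.restrict_univ]
    refine (lintegral_mono_ae hg).trans ?_
    simp
  have hd1 : μ₁ δ = (μ₂ δ).withDensity (fun x => min (f x) 1) +
      (μ₂ δ).withDensity (fun x => f x - 1) := by
    rw [← withDensity_add_left (hfm.min measurable_const)]
    conv_lhs => rw [← hwd]
    congr 1
    ext x
    simp only [Pi.add_apply]
    rcases le_total (f x) 1 with h | h
    · simp [h, tsub_eq_zero_of_le h]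
    · simp [h, add_tsub_cancel_of_le h]
  have hd2 : μ₂ δ = (μ₁ δ).withDensity (fun x => min 1 (f x)⁻¹) +
      (μ₂ δ).withDensity (fun x => 1 - f x) := by
    have hm1 : Measurable (fun x => min 1 (f x)⁻¹) := measurable_const.min hfm.inv
    conv_rhs => rw [← hwd]
    rw [← withDensity_mul _ hfm hm1, ← withDensity_add_left (hfm.mul hm1)]
    conv_lhs => rw [← withDensity_one (μ := μ₂ δ)]
    apply withDensity_congr_ae
    filter_upwards [hft] with x hx
    simp only [Pi.add_apply, Pi.mul_apply, Pi.one_apply]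
    rcases le_total (f x) 1 with h | h
    · rw [min_eq_left (ENNReal.one_le_inv.2 h), mul_one, add_tsub_cancel_of_le h]
    · rw [min_eq_right (ENNReal.inv_le_one.2 h), tsub_eq_zero_of_le h, add_zero,
        ENNReal.mul_inv_cancel (fun h0 => by simp [h0] at h) hx]
  have e1 := aux_W1 μ (μ₂ δ) (μ₁ δ) _ _ hS _ hδl hdiam _ (hfm.min measurable_const)
    (fun x => min_le_right _ _) hS2 ((withDensity_absolutelyContinuous _ _).ae_le hS2) hd1 _ hδk
    (hr _ (hb.mono fun x hx => hx.1)) x₀ hx₀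
  have e2 := aux_W1 μ (μ₁ δ) (μ₂ δ) _ _ hS _ hδl hdiam _ (measurable_const.min hfm.inv)
    (fun x => min_le_left _ _) hS1 ((withDensity_absolutelyContinuous _ _).ae_le hS2) hd2 _ hδk
    (hr _ (hb.mono fun x hx => hx.2)) x₀ hx₀
  have hp : 0 < δ ^ (k + l) := by positivity
  have he : C₁ * δ ^ l * (C₂ * δ ^ k) = C₁ * C₂ * δ ^ (k + l) := by
    rw [Real.rpow_add hδ0]; ring
  rw [he] at e1 e2
  rw [abs_le]
  constructor <;> linarith
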